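/- arXiv:2006.02575 — 2 statements merged into one kernel-verified Lean document; each statement's English description precedes it below -/
import Mathlib

section
/- Let ε′ > 0 and ε = 2ε′². Let K ≥ 1, let w₁, …, w_K be positive reals summing to 1, let μ₁, …, μ_K ∈ ℝ and σ₁, …, σ_K > 0, and set α_k = N(μ_k, σ_k²) and μ̄ = Σ_k w_k μ_k. Let S > 0 satisfy Σ_{k=1}^K w_k √(ε′⁴ + 4σ_k² S²) = √(ε′⁴ + 4S⁴); then min_k σ_k ≤ S ≤ max_k σ_k, and the Gaussian measure N(μ̄, S²) minimizes the functional α ↦ Σ_{k=1}^K w_k S_ε(α_k, α) over all sub-Gaussian probability measures α on ℝ. -/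
/-!
The proof compares dual values of explicit Gaussian Schrödinger potentials; no existence theorem for
potentials of a general `α` is needed. Write `α* = N(μ̄, S²)`, let `(f k, g k)` be the potentials of
the problem between `α_k` and `α*`, and let `f*` be the symmetric potential of `(α*, α*)`. All are
quadratic polynomials (`pot`). For every `α` with a finite second moment:

* `OT(α_k, α) ≥ ∫ f k dα_k + ∫ g k dα`. This is weak duality (`le_OTe`): the Gibbs density of
  `(f k, g k)` is, for each `y`, a probability density in `x` with respect to `α_k`
  (`pot_marginal`), whatever `α` is. Equality holds at `α = α*` (`OTe_gaussian_le`).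
* `OT(α, α) ≤ 2 ∫ f* dα` (`OTe_self_le`), again with equality at `α*`. Because the Gaussian cost
  kernel is a square, the Gibbs density of `(f*, f*)` factors through a latent Gaussian variable `z`:
  `m(x, y) = ∫ T(x, z) T(y, z) / φ(z) dz`, where `T(x, ·)` is a probability density and
  `φ = ∫ T(x, ·) dα*(x)`. With `r = ∫ T(x, ·) dα(x)`, the density
  `D(x, y) = ∫ T(x, z) T(y, z) / r(z) dz` defines a coupling of `α` with itself. Cauchy-Schwarz gives
  `D² / m ≤ E` with `E = ∫ T T φ / r² dz`, whose integral against `α ⊗ α` is `∫ φ = 1`, and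
  `D log (D / m) ≤ D² / m - D` shows that the entropy of the coupling relative to `m` is nonpositive.

Finally `∑ w_k g k - f*` is constant (`exists_integral_pot_eq`): the equation for `S` matches the
quadratic coefficients, and the choice of `μ̄` the linear ones. Hence the resulting lower bound for
the functional at `α` does not depend on `α`, and it is attained at `α*`.

The bounds on `S` hold since the left side of the fixed-point equation would be strictly larger
(smaller) than the right side if every `σ k` were larger (smaller) than `S`.
-/

open MeasureTheory ProbabilityTheory
open scoped ENNReal Classical

/-- Kullback–Leibler divergence `KL(π ‖ ρ)`, valued in `EReal`:
`∫ log (dπ/dρ) dπ` when `π ≪ ρ` and the log-likelihood ratio is `π`-integrable,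
and `⊤` otherwise. -/
noncomputable def KLdiv {X : Type*} [MeasurableSpace X] (π ρ : Measure X) : EReal :=
  if π ≪ ρ ∧ Integrable (fun x => Real.log (π.rnDeriv ρ x).toReal) π
  then ((∫ x, Real.log (π.rnDeriv ρ x).toReal ∂π : ℝ) : EReal)
  else ⊤

/-- Entropic optimal transport cost on `ℝ` with quadratic cost and product reference
measure: `OT_ε(α, β) = inf { ∫ (x-y)² dπ + ε KL(π ‖ α ⊗ β) }` over couplings `π`
of `α` and `β`. -/
noncomputable def OTe (ε : ℝ) (α β : Measure ℝ) : EReal :=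
  ⨅ (π : Measure (ℝ × ℝ)) (_ : IsProbabilityMeasure π)
    (_ : π.fst = α) (_ : π.snd = β),
    (((∫⁻ p, ENNReal.ofReal ((p.1 - p.2) ^ 2) ∂π : ℝ≥0∞) : EReal)
      + (ε : EReal) * KLdiv π (α.prod β))

/-- Sinkhorn divergence `S_ε(α,β) = OT_ε(α,β) − ½ OT_ε(α,α) − ½ OT_ε(β,β)`. -/
noncomputable def Sdiv (ε : ℝ) (α β : Measure ℝ) : EReal :=
  OTe ε α β - ((1 / 2 : ℝ) : EReal) * OTe ε α α - ((1 / 2 : ℝ) : EReal) * OTe ε β β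

/-- A probability measure on `ℝ` is sub-Gaussian if `∫ exp (x²/q) dα < ∞` for some `q > 0`. -/
def SubGaussian (α : Measure ℝ) : Prop :=
  ∃ q : ℝ, 0 < q ∧ ∫⁻ x, ENNReal.ofReal (Real.exp (x ^ 2 / q)) ∂α < ⊤

/-! ### Duality bounds for general marginals -/

lemma integrable_comp_fst {α : Measure ℝ} {π : Measure (ℝ × ℝ)} (h : π.fst = α) {f : ℝ → ℝ}
    (hf : Integrable f α) :
    Integrable (fun p : ℝ × ℝ => f p.1) π ∧ ∫ p, f p.1 ∂π = ∫ x, f x ∂α := by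
  subst h
  unfold Measure.fst at hf ⊢
  exact ⟨(integrable_map_measure hf.1 measurable_fst.aemeasurable).1 hf,
    (integral_map measurable_fst.aemeasurable hf.1).symm⟩

lemma integrable_comp_snd {β : Measure ℝ} {π : Measure (ℝ × ℝ)} (h : π.snd = β) {f : ℝ → ℝ}
    (hf : Integrable f β) :
    Integrable (fun p : ℝ × ℝ => f p.2) π ∧ ∫ p, f p.2 ∂π = ∫ x, f x ∂β := by
  subst h
  unfold Measure.snd at hf ⊢
  exact ⟨(integrable_map_measure hf.1 measurable_snd.aemeasurable).1 hf,
    (integral_map measurable_snd.aemeasurable hf.1).symm⟩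

lemma integrable_sqdist {α β : Measure ℝ} {π : Measure (ℝ × ℝ)} (h1 : π.fst = α) (h2 : π.snd = β)
    (hα : Integrable (fun x => x ^ 2) α) (hβ : Integrable (fun x => x ^ 2) β) :
    Integrable (fun p : ℝ × ℝ => (p.1 - p.2) ^ 2) π := by
  refine Integrable.mono' (((integrable_comp_fst h1 hα).1.const_mul 2).add
    ((integrable_comp_snd h2 hβ).1.const_mul 2)) (by fun_prop) (ae_of_all _ fun p => ?_)
  rw [Real.norm_of_nonneg (sq_nonneg _)]
  simp only [Pi.add_apply]
  nlinarith [sq_nonneg (p.1 + p.2)]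

lemma lintegral_sqdist {π : Measure (ℝ × ℝ)}
    (h : Integrable (fun p : ℝ × ℝ => (p.1 - p.2) ^ 2) π) :
    ((∫⁻ p, ENNReal.ofReal ((p.1 - p.2) ^ 2) ∂π : ℝ≥0∞) : EReal)
      = ((∫ p, (p.1 - p.2) ^ 2 ∂π : ℝ) : EReal) := by
  rw [← ofReal_integral_eq_lintegral_ofReal h (ae_of_all _ fun p => sq_nonneg _),
    EReal.coe_ennreal_ofReal, max_eq_left (integral_nonneg fun p => sq_nonneg _)]

/-- The logarithm `(f ⊕ g − c) / ε` of the Gibbs density attached to the potentials `f`, `g`, for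
the quadratic cost `c`. -/
noncomputable def logGibbs (ε : ℝ) (f g : ℝ → ℝ) (p : ℝ × ℝ) : ℝ :=
  (f p.1 + g p.2 - (p.1 - p.2) ^ 2) / ε

lemma measurable_logGibbs {ε : ℝ} {f g : ℝ → ℝ} (hf : Measurable f) (hg : Measurable g) :
    Measurable (logGibbs ε f g) := by
  unfold logGibbs; fun_prop

lemma integral_logGibbs {ε : ℝ} (hε : 0 < ε) {α β : Measure ℝ} {π : Measure (ℝ × ℝ)}
    (h1 : π.fst = α) (h2 : π.snd = β)
    (hα : Integrable (fun x => x ^ 2) α) (hβ : Integrable (fun x => x ^ 2) β)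
    {f g : ℝ → ℝ} (hf : Integrable f α) (hg : Integrable g β) :
    Integrable (logGibbs ε f g) π ∧
      ∫ p, (p.1 - p.2) ^ 2 ∂π + ε * ∫ p, logGibbs ε f g p ∂π = ∫ x, f x ∂α + ∫ y, g y ∂β := by
  obtain ⟨f1, f2⟩ := integrable_comp_fst h1 hf
  obtain ⟨g1, g2⟩ := integrable_comp_snd h2 hg
  have hc := integrable_sqdist h1 h2 hα hβ
  refine ⟨((f1.add g1).sub hc).div_const ε, ?_⟩
  unfold logGibbs
  rw [integral_div, integral_sub (by exact f1.add g1) hc, integral_add f1 g1, f2, g2]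
  field_simp
  ring

/-- Weak duality: potentials whose Gibbs density is, for every `y`, a probability density in `x` with
respect to `α` bound the entropic transport cost from below. -/
lemma le_OTe {ε : ℝ} (hε : 0 < ε) {α β : Measure ℝ} [IsProbabilityMeasure α]
    [IsProbabilityMeasure β]
    (hα : Integrable (fun x => x ^ 2) α) (hβ : Integrable (fun x => x ^ 2) β)
    {f g : ℝ → ℝ} (hfm : Measurable f) (hgm : Measurable g)
    (hf : Integrable f α) (hg : Integrable g β)
    (hQ : ∀ y, ∫⁻ x, ENNReal.ofReal (Real.exp (logGibbs ε f g (x, y))) ∂α = 1) :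
    ((∫ x, f x ∂α + ∫ y, g y ∂β : ℝ) : EReal) ≤ OTe ε α β := by
  have hlm := measurable_logGibbs (ε := ε) hfm hgm
  refine le_iInf fun π => le_iInf fun hπ => le_iInf fun h1 => le_iInf fun h2 => ?_
  rw [lintegral_sqdist (integrable_sqdist h1 h2 hα hβ)]
  unfold KLdiv
  split_ifs with h
  swap
  · rw [EReal.coe_mul_top_of_pos hε, EReal.coe_add_top]
    exact le_top
  obtain ⟨hac, hint⟩ := h
  obtain ⟨hl, hsum⟩ := integral_logGibbs hε h1 h2 hα hβ hf hg
  rw [← hsum, ← EReal.coe_mul, ← EReal.coe_add, EReal.coe_le_coe_iff]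
  refine add_le_add_right (mul_le_mul_of_nonneg_left ?_ hε.le) _
  set R := π.rnDeriv (α.prod β) with hR
  have hRm : Measurable R := Measure.measurable_rnDeriv _ _
  have hπR : (α.prod β).withDensity R = π := Measure.withDensity_rnDeriv_eq _ _ hac
  have hhm : Measurable fun p => Real.exp (logGibbs ε f g p) / (R p).toReal := by fun_prop
  have hmass : ∫⁻ p, ENNReal.ofReal (Real.exp (logGibbs ε f g p) / (R p).toReal) ∂π ≤ 1 := by
    calc _ = ∫⁻ p, ENNReal.ofReal (Real.exp (logGibbs ε f g p) / (R p).toReal)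
              ∂((α.prod β).withDensity R) := by rw [hπR]
      _ = ∫⁻ p, R p * ENNReal.ofReal (Real.exp (logGibbs ε f g p) / (R p).toReal)
            ∂(α.prod β) := by
          rw [lintegral_withDensity_eq_lintegral_mul _ hRm (by fun_prop)]; rfl
      _ ≤ ∫⁻ p, ENNReal.ofReal (Real.exp (logGibbs ε f g p)) ∂(α.prod β) := by
          refine lintegral_mono_ae ?_
          filter_upwards [Measure.rnDeriv_lt_top π (α.prod β)] with p hp
          rw [← hR] at hp
          rcases eq_or_ne (R p) 0 with h0 | h0
          · simp [h0]
          · have : 0 < (R p).toReal := ENNReal.toReal_pos h0 hp.ne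
            conv_lhs => rw [← ENNReal.ofReal_toReal hp.ne]
            rw [← ENNReal.ofReal_mul this.le]
            simp only [ENNReal.toReal_ofReal this.le]
            rw [mul_div_cancel₀ _ this.ne']
      _ = 1 := by
          rw [lintegral_prod_symm _ (by fun_prop)]
          simp [hQ]
  have hnn : 0 ≤ᵐ[π] fun p => Real.exp (logGibbs ε f g p) / (R p).toReal :=
    ae_of_all _ fun p => by positivity
  have hhi : Integrable (fun p => Real.exp (logGibbs ε f g p) / (R p).toReal) π :=
    ⟨hhm.aestronglyMeasurable, by
      rw [hasFiniteIntegral_iff_ofReal hnn]; exact hmass.trans_lt ENNReal.one_lt_top⟩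
  have hh1 : ∫ p, Real.exp (logGibbs ε f g p) / (R p).toReal ∂π ≤ 1 := by
    rw [integral_eq_lintegral_of_nonneg_ae hnn hhm.aestronglyMeasurable]
    exact ENNReal.toReal_le_of_le_ofReal zero_le_one (by simpa using hmass)
  -- `log t ≤ t - 1` with `t` the ratio of the Gibbs density to the density of the coupling.
  have key : ∫ p, logGibbs ε f g p ∂π ≤ ∫ p, (Real.log (R p).toReal
      + (Real.exp (logGibbs ε f g p) / (R p).toReal - 1)) ∂π := by
    refine integral_mono_ae hl (hint.add (hhi.sub (integrable_const 1))) ?_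
    filter_upwards [Measure.rnDeriv_pos hac, hac.ae_le (Measure.rnDeriv_lt_top π (α.prod β))]
      with p hp0 hp
    rw [← hR] at hp hp0
    have hpos : 0 < (R p).toReal := ENNReal.toReal_pos hp0.ne' hp.ne
    have := Real.log_le_sub_one_of_pos (div_pos (Real.exp_pos (logGibbs ε f g p)) hpos)
    rw [Real.log_div (Real.exp_pos _).ne' hpos.ne', Real.log_exp] at this
    linarith
  rw [integral_add hint (by exact hhi.sub (integrable_const 1)),
    integral_sub hhi (integrable_const 1)] at key
  simp only [integral_const, probReal_univ, smul_eq_mul, mul_one] at key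
  linarith

lemma withDensity_marginals {α β : Measure ℝ} [IsProbabilityMeasure α]
    [IsProbabilityMeasure β] {D : ℝ × ℝ → ℝ≥0∞} (hD : Measurable D)
    (hD1 : ∀ x, ∫⁻ y, D (x, y) ∂β = 1) (hD2 : ∀ y, ∫⁻ x, D (x, y) ∂α = 1) :
    IsProbabilityMeasure ((α.prod β).withDensity D) ∧ ((α.prod β).withDensity D).fst = α ∧
      ((α.prod β).withDensity D).snd = β := by
  have hfst : ((α.prod β).withDensity D).fst = α := by
    ext s hs
    rw [Measure.fst_apply hs, withDensity_apply _ (measurable_fst hs),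
      ← lintegral_indicator (measurable_fst hs), lintegral_prod _ (by
        exact (hD.indicator (measurable_fst hs)).aemeasurable)]
    calc _ = ∫⁻ x, s.indicator 1 x ∂α := by
          refine lintegral_congr fun x => ?_
          by_cases hx : x ∈ s
          · simp [Set.indicator, hx, hD1]
          · simp [Set.indicator, hx]
      _ = α s := by rw [lintegral_indicator_one hs]
  have hsnd : ((α.prod β).withDensity D).snd = β := by
    ext s hs
    rw [Measure.snd_apply hs, withDensity_apply _ (measurable_snd hs),
      ← lintegral_indicator (measurable_snd hs), lintegral_prod_symm _ (by
        exact (hD.indicator (measurable_snd hs)).aemeasurable)]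
    calc _ = ∫⁻ x, s.indicator 1 x ∂β := by
          refine lintegral_congr fun x => ?_
          by_cases hx : x ∈ s
          · simp [Set.indicator, hx, hD2]
          · simp [Set.indicator, hx]
      _ = β s := by rw [lintegral_indicator_one hs]
  refine ⟨⟨?_⟩, hfst, hsnd⟩
  rw [← Measure.fst_univ, hfst, measure_univ]

/-- Primal bound: a coupling with density `D` whose chi-square type functional `D² / m`, relative to
the Gibbs density `m` of `f`, `g`, is dominated by some `E` of total mass at most one, costs no more
than the dual value of `f`, `g`. This rests on `D log (D / m) ≤ D² / m - D`. -/
lemma OTe_le {ε : ℝ} (hε : 0 < ε) {α β : Measure ℝ} [IsProbabilityMeasure α]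
    [IsProbabilityMeasure β]
    (hα : Integrable (fun x => x ^ 2) α) (hβ : Integrable (fun x => x ^ 2) β)
    {f g : ℝ → ℝ} (hf : Integrable f α) (hg : Integrable g β)
    {D E : ℝ × ℝ → ℝ≥0∞} (hD : Measurable D) (hE : Measurable E)
    (hD1 : ∀ x, ∫⁻ y, D (x, y) ∂β = 1) (hD2 : ∀ y, ∫⁻ x, D (x, y) ∂α = 1)
    (hE1 : ∫⁻ p, E p ∂(α.prod β) ≤ 1)
    (hDE : ∀ p, D p < ⊤ → E p < ⊤ →
      (D p).toReal ^ 2 ≤ Real.exp (logGibbs ε f g p) * (E p).toReal) :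
    OTe ε α β ≤ ((∫ x, f x ∂α + ∫ y, g y ∂β : ℝ) : EReal) := by
  obtain ⟨hprob, h1, h2⟩ := withDensity_marginals hD hD1 hD2
  set π := (α.prod β).withDensity D with hπ
  have hac : π ≪ α.prod β := withDensity_absolutelyContinuous _ _
  obtain ⟨hl, hsum⟩ := integral_logGibbs hε h1 h2 hα hβ hf hg
  have hDint : ∫⁻ p, D p ∂(α.prod β) = 1 := by
    rw [lintegral_prod _ hD.aemeasurable]; simp [hD1]
  have hDtop : ∀ᵐ p ∂(α.prod β), D p < ⊤ := ae_lt_top hD (by simp [hDint])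
  have hEtop : ∀ᵐ p ∂(α.prod β), E p < ⊤ := ae_lt_top hE (hE1.trans_lt ENNReal.one_lt_top).ne
  have hDi : Integrable (fun p => (D p).toReal) (α.prod β) :=
    integrable_toReal_of_lintegral_ne_top hD.aemeasurable (by simp [hDint])
  have hEi : Integrable (fun p => (E p).toReal) (α.prod β) :=
    integrable_toReal_of_lintegral_ne_top hE.aemeasurable (hE1.trans_lt ENNReal.one_lt_top).ne
  have hD1' : ∫ p, (D p).toReal ∂(α.prod β) = 1 := by
    rw [integral_toReal hD.aemeasurable hDtop, hDint, ENNReal.toReal_one]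
  have hE1' : ∫ p, (E p).toReal ∂(α.prod β) ≤ 1 := by
    rw [integral_toReal hE.aemeasurable hEtop]
    exact ENNReal.toReal_le_of_le_ofReal zero_le_one (by simpa using hE1)
  have hDl : Integrable (fun p => (D p).toReal * logGibbs ε f g p) (α.prod β) := by
    rw [hπ, integrable_withDensity_iff_integrable_smul' hD hDtop] at hl
    exact hl
  have hup : ∀ᵐ p ∂(α.prod β), (D p).toReal * Real.log (D p).toReal
      ≤ (D p).toReal * logGibbs ε f g p + ((E p).toReal - (D p).toReal) := by
    filter_upwards [hDtop, hEtop] with p hp hp'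
    have h := hDE p hp hp'
    rcases (ENNReal.toReal_nonneg (a := D p)).eq_or_lt with h0 | h0
    · rw [← h0]; simp
    · have hm := Real.exp_pos (logGibbs ε f g p)
      have hlog := Real.log_le_sub_one_of_pos (div_pos h0 hm)
      rw [Real.log_div h0.ne' hm.ne', Real.log_exp] at hlog
      have h3 : (D p).toReal * ((D p).toReal / Real.exp (logGibbs ε f g p)) ≤ (E p).toReal := by
        rw [← mul_div_assoc, div_le_iff₀ hm, ← sq]; linarith
      nlinarith [mul_le_mul_of_nonneg_left hlog h0.le]
  have hlow : ∀ p, -1 ≤ (D p).toReal * Real.log (D p).toReal := by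
    intro p
    rcases (ENNReal.toReal_nonneg (a := D p)).eq_or_lt with h0 | h0
    · rw [← h0]; simp
    · have := mul_le_mul_of_nonneg_left (Real.one_sub_inv_le_log_of_pos h0) h0.le
      rw [mul_sub, mul_inv_cancel₀ h0.ne'] at this
      linarith
  have hDlog : Integrable (fun p => (D p).toReal * Real.log (D p).toReal) (α.prod β) := by
    refine Integrable.mono' (((integrable_const 1).add hDl.abs).add hEi) (by fun_prop) ?_
    filter_upwards [hup] with p hp
    have := hlow p
    have h3 := le_abs_self ((D p).toReal * logGibbs ε f g p)
    have h4 := abs_nonneg ((D p).toReal * logGibbs ε f g p)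
    have h5 := ENNReal.toReal_nonneg (a := D p)
    have h6 := ENNReal.toReal_nonneg (a := E p)
    simp only [Pi.add_apply]
    rw [Real.norm_eq_abs, abs_le]
    constructor <;> linarith
  have hrn : (fun p => Real.log (π.rnDeriv (α.prod β) p).toReal)
      =ᵐ[π] fun p => Real.log (D p).toReal := by
    filter_upwards [hac.ae_le (Measure.rnDeriv_withDensity (α.prod β) hD)] with p hp
    rw [hp]
  have hlogi : Integrable (fun p => Real.log (D p).toReal) π := by
    rw [hπ, integrable_withDensity_iff_integrable_smul' hD hDtop]
    exact hDlog
  have hKL : KLdiv π (α.prod β) = ((∫ p, Real.log (D p).toReal ∂π : ℝ) : EReal) := by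
    unfold KLdiv
    rw [if_pos ⟨hac, (integrable_congr hrn).2 hlogi⟩, integral_congr_ae hrn]
  have hle : ∫ p, Real.log (D p).toReal ∂π ≤ ∫ p, logGibbs ε f g p ∂π := by
    rw [hπ, integral_withDensity_eq_integral_toReal_smul hD hDtop,
      integral_withDensity_eq_integral_toReal_smul hD hDtop]
    simp only [smul_eq_mul]
    have := integral_mono_ae hDlog (hDl.add (hEi.sub hDi)) hup
    rw [integral_add' hDl (hEi.sub hDi), integral_sub' hEi hDi] at this
    linarith
  refine (iInf_le_of_le π (iInf_le_of_le hprob (iInf_le_of_le h1 (iInf_le _ h2)))).trans ?_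
  rw [lintegral_sqdist (integrable_sqdist h1 h2 hα hβ), hKL, ← hsum, ← EReal.coe_mul,
    ← EReal.coe_add, EReal.coe_le_coe_iff]
  gcongr

/-- If the Gibbs density of `f`, `g` has both marginals equal to one, it is that of an admissible
coupling, whose cost is the dual value of `f`, `g`. -/
lemma OTe_le_of_schroedinger {ε : ℝ} (hε : 0 < ε) {α β : Measure ℝ} [IsProbabilityMeasure α]
    [IsProbabilityMeasure β]
    (hα : Integrable (fun x => x ^ 2) α) (hβ : Integrable (fun x => x ^ 2) β)
    {f g : ℝ → ℝ} (hfm : Measurable f) (hgm : Measurable g)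
    (hf : Integrable f α) (hg : Integrable g β)
    (hQ1 : ∀ x, ∫⁻ y, ENNReal.ofReal (Real.exp (logGibbs ε f g (x, y))) ∂β = 1)
    (hQ2 : ∀ y, ∫⁻ x, ENNReal.ofReal (Real.exp (logGibbs ε f g (x, y))) ∂α = 1) :
    OTe ε α β ≤ ((∫ x, f x ∂α + ∫ y, g y ∂β : ℝ) : EReal) := by
  have hlm := measurable_logGibbs (ε := ε) hfm hgm
  have hm : Measurable fun p => ENNReal.ofReal (Real.exp (logGibbs ε f g p)) := by fun_prop
  refine OTe_le hε hα hβ hf hg hm hm hQ1 hQ2 ?_ fun p _ _ => ?_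
  · rw [lintegral_prod _ hm.aemeasurable]
    simp [hQ1]
  · rw [ENNReal.toReal_ofReal (Real.exp_pos _).le, sq]

/-- Upper bound on the self-transport cost of an arbitrary `α`. Suppose the Gibbs density of `(f, f)`
factors through a latent variable `z`, as `T x z * T y z = m x y * G x y z * φ z` with `T x`,
`G x y`, `φ` probability densities in `z`. The coupling that draws `z` from `∫ T x dα(x)` and then
two independent points from the posterior of `x` given `z` has cost at most `2 ∫ f dα`. -/
lemma OTe_self_le {ε : ℝ} (hε : 0 < ε) {α : Measure ℝ} [IsProbabilityMeasure α]
    (hα : Integrable (fun x => x ^ 2) α) {f : ℝ → ℝ}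
    (hf : Integrable f α) {C : ℝ}
    {T : ℝ → ℝ → ℝ} {G : ℝ → ℝ → ℝ → ℝ} {φ : ℝ → ℝ}
    (hT : Measurable (Function.uncurry T)) (hφ : Measurable φ)
    (hGm : ∀ x y, Measurable (G x y))
    (hT0 : ∀ x z, 0 < T x z) (hTC : ∀ x z, T x z ≤ C)
    (hφ0 : ∀ z, 0 < φ z) (hG0 : ∀ x y z, 0 < G x y z)
    (hT1 : ∀ x, ∫⁻ z, ENNReal.ofReal (T x z) = 1) (hφ1 : ∫⁻ z, ENNReal.ofReal (φ z) = 1)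
    (hG1 : ∀ x y, ∫⁻ z, ENNReal.ofReal (G x y z) = 1)
    (hfac : ∀ x y z, T x z * T y z = Real.exp (logGibbs ε f f (x, y)) * G x y z * φ z) :
    OTe ε α α ≤ ((∫ x, f x ∂α + ∫ y, f y ∂α : ℝ) : EReal) := by
  have hTx : ∀ x, Measurable (T x) := fun x => hT.comp measurable_prodMk_left
  have hTz : ∀ z, Measurable fun x => T x z := fun z => hT.comp measurable_prodMk_right
  have hTi : ∀ z, Integrable (fun x => T x z) α := fun z =>
    Integrable.mono' (integrable_const C) (hTz z).aestronglyMeasurable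
      (ae_of_all _ fun x => by rw [Real.norm_of_nonneg (hT0 x z).le]; exact hTC x z)
  set r : ℝ → ℝ := fun z => ∫ x, T x z ∂α with hr
  have hrm : Measurable r := by
    have : StronglyMeasurable fun z => ∫ x, (Function.uncurry T) (x, z) ∂α :=
      hT.stronglyMeasurable.integral_prod_left'
    exact this.measurable
  have hr0 : ∀ z, 0 < r z := fun z => by
    rw [hr, integral_pos_iff_support_of_nonneg (fun x => (hT0 x z).le) (hTi z)]
    have : Function.support (fun x => T x z) = Set.univ := by
      ext x; simp [(hT0 x z).ne']
    rw [this]; simp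
  have hrl : ∀ z, ∫⁻ x, ENNReal.ofReal (T x z) ∂α = ENNReal.ofReal (r z) := fun z =>
    (ofReal_integral_eq_lintegral_ofReal (hTi z) (ae_of_all _ fun x => (hT0 x z).le)).symm
  have hT' : Measurable fun q : ℝ × ℝ => T q.1 q.2 := hT
  have m1 : Measurable fun q : (ℝ × ℝ) × ℝ => T q.1.1 q.2 :=
    hT'.comp ((measurable_fst.comp measurable_fst).prodMk measurable_snd)
  have m2 : Measurable fun q : (ℝ × ℝ) × ℝ => T q.1.2 q.2 :=
    hT'.comp ((measurable_snd.comp measurable_fst).prodMk measurable_snd)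
  have mD : Measurable fun q : (ℝ × ℝ) × ℝ =>
      ENNReal.ofReal (T q.1.1 q.2 * T q.1.2 q.2 / r q.2) := by fun_prop
  have mE : Measurable fun q : (ℝ × ℝ) × ℝ =>
      ENNReal.ofReal (T q.1.1 q.2 * T q.1.2 q.2 * (φ q.2 / r q.2 ^ 2)) := by fun_prop
  have hD1 : ∀ x, ∫⁻ y, (∫⁻ z, ENNReal.ofReal (T x z * T y z / r z)) ∂α = 1 := by
    intro x
    rw [lintegral_lintegral_swap, ← hT1 x]
    · refine lintegral_congr fun z => ?_
      have : ∀ y, ENNReal.ofReal (T x z * T y z / r z)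
          = ENNReal.ofReal (T x z / r z) * ENNReal.ofReal (T y z) := fun y => by
        rw [← ENNReal.ofReal_mul (div_pos (hT0 _ _) (hr0 _)).le]; congr 1; ring
      simp_rw [this]
      rw [lintegral_const_mul _ (hTz z).ennreal_ofReal, hrl,
        ← ENNReal.ofReal_mul (div_pos (hT0 _ _) (hr0 _)).le, div_mul_cancel₀ _ (hr0 z).ne']
    · have hx := hTx x
      refine Measurable.aemeasurable ?_
      unfold Function.uncurry
      have : Measurable fun q : ℝ × ℝ => T x q.2 := hx.comp measurable_snd
      fun_prop
  refine OTe_le hε hα hα hf hf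
    (D := fun p => ∫⁻ z, ENNReal.ofReal (T p.1 z * T p.2 z / r z))
    (E := fun p => ∫⁻ z, ENNReal.ofReal (T p.1 z * T p.2 z * (φ z / r z ^ 2)))
    mD.lintegral_prod_right' mE.lintegral_prod_right' hD1 ?_ ?_ ?_
  · intro y
    rw [← hD1 y]
    refine lintegral_congr fun x => lintegral_congr fun z => ?_
    rw [mul_comm]
  · rw [lintegral_lintegral_swap mE.aemeasurable, ← hφ1]
    refine le_of_eq (lintegral_congr fun z => ?_)
    have hpos : 0 < φ z / r z ^ 2 := div_pos (hφ0 z) (pow_pos (hr0 z) 2)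
    rw [lintegral_prod _ (by
      have := hTz z
      have h1 : Measurable fun q : ℝ × ℝ => T q.1 z := this.comp measurable_fst
      have h2 : Measurable fun q : ℝ × ℝ => T q.2 z := this.comp measurable_snd
      fun_prop)]
    have : ∀ x y, ENNReal.ofReal (T x z * T y z * (φ z / r z ^ 2))
        = ENNReal.ofReal (φ z / r z ^ 2) * ENNReal.ofReal (T x z) * ENNReal.ofReal (T y z) :=
      fun x y => by
        rw [← ENNReal.ofReal_mul hpos.le, ← ENNReal.ofReal_mul (mul_pos hpos (hT0 _ _)).le]
        congr 1; ring
    simp_rw [this, lintegral_const_mul _ (hTz z).ennreal_ofReal, hrl]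
    rw [lintegral_mul_const _ (by have := hTz z; fun_prop),
      lintegral_const_mul _ (hTz z).ennreal_ofReal, hrl,
      ← ENNReal.ofReal_mul hpos.le, ← ENNReal.ofReal_mul (mul_pos hpos (hr0 _)).le]
    congr 1
    have := (hr0 z).ne'
    field_simp
  · -- Cauchy-Schwarz under the probability density `G x y`, for the function `φ / r`.
    rintro ⟨x, y⟩ hDt hEt
    simp only at hDt hEt ⊢
    have hm := Real.exp_pos (logGibbs ε f f (x, y))
    set m := Real.exp (logGibbs ε f f (x, y)) with hmdef
    have hxm := hTx x
    have hym := hTx y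
    have hgm := hGm x y
    have hGi : Integrable (G x y) := ⟨hgm.aestronglyMeasurable, by
      rw [hasFiniteIntegral_iff_ofReal (ae_of_all _ fun z => (hG0 x y z).le), hG1]
      exact ENNReal.one_lt_top⟩
    have hGint : ∫ z, G x y z = 1 := by
      rw [integral_eq_lintegral_of_nonneg_ae (ae_of_all _ fun z => (hG0 x y z).le)
        hgm.aestronglyMeasurable, hG1, ENNReal.toReal_one]
    have n1 : ∀ z, 0 ≤ T x z * T y z / r z := fun z =>
      (div_pos (mul_pos (hT0 _ _) (hT0 _ _)) (hr0 _)).le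
    have n2 : ∀ z, 0 ≤ T x z * T y z * (φ z / r z ^ 2) := fun z =>
      (mul_pos (mul_pos (hT0 _ _) (hT0 _ _)) (div_pos (hφ0 z) (pow_pos (hr0 z) 2))).le
    have i1 : Integrable fun z => T x z * T y z / r z :=
      ⟨Measurable.aestronglyMeasurable (by fun_prop), by
        rw [hasFiniteIntegral_iff_ofReal (ae_of_all _ n1)]; exact hDt⟩
    have i2 : Integrable fun z => T x z * T y z * (φ z / r z ^ 2) :=
      ⟨Measurable.aestronglyMeasurable (by fun_prop), by
        rw [hasFiniteIntegral_iff_ofReal (ae_of_all _ n2)]; exact hEt⟩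
    rw [← integral_eq_lintegral_of_nonneg_ae (ae_of_all _ n1) i1.1,
      ← integral_eq_lintegral_of_nonneg_ae (ae_of_all _ n2) i2.1]
    set d := ∫ z, T x z * T y z / r z
    have key : ∫ z, 2 * (d / m) * (T x z * T y z / r z)
        ≤ ∫ z, (T x z * T y z * (φ z / r z ^ 2) + (d / m) ^ 2 * m * G x y z) := by
      refine integral_mono (i1.const_mul _) (i2.add (hGi.const_mul _)) fun z => ?_
      simp only [hfac, ← hmdef]
      have h0 := hr0 z
      have : m * G x y z * φ z * (φ z / r z ^ 2) + (d / m) ^ 2 * m * G x y z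
          - 2 * (d / m) * (m * G x y z * φ z / r z)
          = m * G x y z * (φ z / r z - d / m) ^ 2 := by
        field_simp
        ring
      have h3 : 0 ≤ m * G x y z * (φ z / r z - d / m) ^ 2 :=
        mul_nonneg (mul_pos hm (hG0 x y z)).le (sq_nonneg _)
      linarith
    rw [integral_const_mul, integral_add i2 (hGi.const_mul _), integral_const_mul, hGint] at key
    have h5 : 2 * (d / m) * d - (d / m) ^ 2 * m * 1 = d ^ 2 / m := by field_simp; ring
    have h6 : d ^ 2 / m ≤ ∫ z, T x z * T y z * (φ z / r z ^ 2) := by rw [← h5]; linarith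
    rw [div_le_iff₀ hm] at h6
    linarith

/-! ### Gaussian Schrödinger potentials -/

/-- The Schrödinger potential on the side of `N(m, s²)` for the problem between `N(m, s²)` and
`N(n, S²)` with `ε = 2 e²`. The parameter `D` stands for `√(e⁴ + 4 s² S²)`; it enters only through
`D ^ 2 = e ^ 4 + 4 * s ^ 2 * S ^ 2`, so the potential on the other side is `pot e D n m S`. The
additive constant is split evenly between the two sides. -/
noncomputable def pot (e D m n s : ℝ) (x : ℝ) : ℝ :=
  (1 - (D - e ^ 2) / (2 * s ^ 2)) * (x - m) ^ 2 + 2 * (m - n) * (x - m) + (m - n) ^ 2 / 2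
    + e ^ 2 * (Real.log ((D + e ^ 2) / (2 * e ^ 2)) / 2)

lemma measurable_pot (e D m n s : ℝ) : Measurable (pot e D m n s) := by
  unfold pot; fun_prop

lemma integrable_of_sq {α : Measure ℝ} [IsProbabilityMeasure α]
    (hα : Integrable (fun x => x ^ 2) α) : Integrable (fun x => x) α := by
  refine Integrable.mono' (hα.add (integrable_const 1)) (by fun_prop) (ae_of_all _ fun x => ?_)
  simp only [Pi.add_apply, Real.norm_eq_abs, abs_le]
  constructor <;> nlinarith [sq_nonneg (x - 1), sq_nonneg (x + 1)]

lemma integrable_pot {α : Measure ℝ} [IsProbabilityMeasure α]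
    (hα : Integrable (fun x => x ^ 2) α) (e D m n s : ℝ) : Integrable (pot e D m n s) α := by
  have h1 := integrable_of_sq hα
  have h2 : Integrable (fun x => (x - m) ^ 2) α := by
    have := (hα.sub (h1.const_mul (2 * m))).add (integrable_const (m ^ 2))
    refine this.congr (ae_of_all _ fun x => ?_)
    simp only [Pi.add_apply, Pi.sub_apply]
    ring
  have h3 : Integrable (fun x => x - m) α := h1.sub (integrable_const m)
  exact (((h2.const_mul _).add (h3.const_mul _)).add (integrable_const _)).add (integrable_const _)

lemma gaussianPDFReal_toNNReal {v : ℝ} (hv : 0 ≤ v) (m x : ℝ) :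
    gaussianPDFReal m v.toNNReal x
      = (√(2 * Real.pi * v))⁻¹ * Real.exp (-(x - m) ^ 2 / (2 * v)) := by
  rw [gaussianPDFReal, Real.coe_toNNReal v hv]

lemma lintegral_gaussianPDFReal_toNNReal {v : ℝ} (hv : 0 < v) (m : ℝ) :
    ∫⁻ x, ENNReal.ofReal (gaussianPDFReal m v.toNNReal x) = 1 :=
  lintegral_gaussianPDFReal_eq_one m (by simpa using hv)

lemma integrable_sq_gaussianReal (m : ℝ) (v : NNReal) :
    Integrable (fun x => x ^ 2) (gaussianReal m v) :=
  (memLp_id_gaussianReal (μ := m) (v := v) 2).integrable_sq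

/-- Schrödinger equation for Gaussian marginals: conditionally on `y`, the Gibbs density of the two
potentials turns `N(m, s²)` into a Gaussian probability measure. -/
lemma pot_marginal {e s S D : ℝ} (he : 0 < e) (hs : 0 < s) (hS : 0 < S) (hD : 0 < D)
    (hD2 : D ^ 2 = e ^ 4 + 4 * s ^ 2 * S ^ 2) (m n y : ℝ) :
    ∫⁻ x, ENNReal.ofReal (Real.exp (logGibbs (2 * e ^ 2) (pot e D m n s) (pot e D n m S) (x, y)))
      ∂(gaussianReal m (s ^ 2).toNNReal) = 1 := by
  set r : ℝ := (D + e ^ 2) / (2 * e ^ 2) with hr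
  have hr0 : 0 < r := by positivity
  have hv : 0 < s ^ 2 / r := by positivity
  have hcoef : (D - e ^ 2) / (2 * S ^ 2) = 2 * s ^ 2 / (D + e ^ 2) := by
    rw [div_eq_div_iff (by positivity) (by positivity)]
    linear_combination hD2
  have hlm := measurable_logGibbs (ε := 2 * e ^ 2) (measurable_pot e D m n s)
    (measurable_pot e D n m S)
  rw [gaussianReal_of_var_ne_zero _ (by simpa using hs.ne'),
    lintegral_withDensity_eq_lintegral_mul _ (measurable_gaussianPDF _ _) (by fun_prop),
    ← lintegral_gaussianPDFReal_toNNReal hv (m + s ^ 2 / r * (y - n) / e ^ 2)]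
  refine lintegral_congr fun x => ?_
  simp only [Pi.mul_apply, gaussianPDF]
  rw [← ENNReal.ofReal_mul (gaussianPDFReal_nonneg _ _ _), gaussianPDFReal_toNNReal (by positivity),
    gaussianPDFReal_toNNReal hv.le]
  have hsplit : logGibbs (2 * e ^ 2) (pot e D m n s) (pot e D n m S) (x, y)
      = Real.log r / 2 + (-((D - e ^ 2) / (2 * s ^ 2)) * (x - m) ^ 2
        - 2 * s ^ 2 / (D + e ^ 2) * (y - n) ^ 2 + 2 * (x - m) * (y - n)) / (2 * e ^ 2) := by
    unfold logGibbs pot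
    simp only
    rw [hcoef, ← hr]
    field_simp
    ring
  have hconst : (√(2 * Real.pi * (s ^ 2 / r)))⁻¹ = (√(2 * Real.pi * s ^ 2))⁻¹ * √r := by
    rw [← mul_div_assoc, Real.sqrt_div (by positivity), inv_div, div_eq_inv_mul]
  rw [hsplit, Real.exp_add, hconst, ← Real.log_sqrt hr0.le, Real.exp_log (Real.sqrt_pos.2 hr0)]
  have hexp : -(x - (m + s ^ 2 / r * (y - n) / e ^ 2)) ^ 2 / (2 * (s ^ 2 / r))
      = -(x - m) ^ 2 / (2 * s ^ 2) + (-((D - e ^ 2) / (2 * s ^ 2)) * (x - m) ^ 2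
        - 2 * s ^ 2 / (D + e ^ 2) * (y - n) ^ 2 + 2 * (x - m) * (y - n)) / (2 * e ^ 2) := by
    rw [hr]
    field_simp
    ring
  rw [hexp, Real.exp_add]
  congr 1
  ring

lemma logGibbs_swap (ε : ℝ) (f g : ℝ → ℝ) (x y : ℝ) :
    logGibbs ε f g (x, y) = logGibbs ε g f (y, x) := by
  unfold logGibbs; simp only; ring

lemma le_OTe_gaussian {e s S D : ℝ} (he : 0 < e) (hs : 0 < s) (hS : 0 < S) (hD : 0 < D)
    (hD2 : D ^ 2 = e ^ 4 + 4 * s ^ 2 * S ^ 2) (m n : ℝ) {α : Measure ℝ} [IsProbabilityMeasure α]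
    (hα : Integrable (fun x => x ^ 2) α) :
    ((∫ x, pot e D m n s x ∂(gaussianReal m (s ^ 2).toNNReal) + ∫ y, pot e D n m S y ∂α : ℝ)
      : EReal) ≤ OTe (2 * e ^ 2) (gaussianReal m (s ^ 2).toNNReal) α :=
  le_OTe (by positivity) (integrable_sq_gaussianReal _ _) hα (measurable_pot _ _ _ _ _)
    (measurable_pot _ _ _ _ _) (integrable_pot (integrable_sq_gaussianReal _ _) _ _ _ _ _)
    (integrable_pot hα _ _ _ _ _) (pot_marginal he hs hS hD hD2 m n)

lemma OTe_gaussian_le {e s S D : ℝ} (he : 0 < e) (hs : 0 < s) (hS : 0 < S) (hD : 0 < D)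
    (hD2 : D ^ 2 = e ^ 4 + 4 * s ^ 2 * S ^ 2) (m n : ℝ) :
    OTe (2 * e ^ 2) (gaussianReal m (s ^ 2).toNNReal) (gaussianReal n (S ^ 2).toNNReal)
      ≤ ((∫ x, pot e D m n s x ∂(gaussianReal m (s ^ 2).toNNReal)
        + ∫ y, pot e D n m S y ∂(gaussianReal n (S ^ 2).toNNReal) : ℝ) : EReal) := by
  refine OTe_le_of_schroedinger (by positivity) (integrable_sq_gaussianReal _ _)
    (integrable_sq_gaussianReal _ _) (measurable_pot _ _ _ _ _)
    (measurable_pot _ _ _ _ _) (integrable_pot (integrable_sq_gaussianReal _ _) _ _ _ _ _)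
    (integrable_pot (integrable_sq_gaussianReal _ _) _ _ _ _ _) (fun x => ?_)
    (pot_marginal he hs hS hD hD2 m n)
  simp_rw [logGibbs_swap _ (pot e D m n s)]
  exact pot_marginal he hS hs hD (by rw [hD2]; ring) n m x

/-- The symmetric potential of `N(n, S²)` bounds the self-transport cost of every `α`: its Gibbs
density factors through the latent variable `z` with law `N(x, q)` given `x`, where
`q = (e² - 2 S² + D) / 2`. -/
lemma OTe_self_le_gaussian {e S D : ℝ} (he : 0 < e) (hS : 0 < S) (hD : 0 < D)
    (hD2 : D ^ 2 = e ^ 4 + 4 * S ^ 4) (n : ℝ) {α : Measure ℝ} [IsProbabilityMeasure α]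
    (hα : Integrable (fun x => x ^ 2) α) :
    OTe (2 * e ^ 2) α α
      ≤ ((∫ x, pot e D n n S x ∂α + ∫ x, pot e D n n S x ∂α : ℝ) : EReal) := by
  have hDS : 2 * S ^ 2 < D := by
    refine lt_of_pow_lt_pow_left₀ 2 hD.le ?_
    rw [hD2]
    have : 0 < e ^ 4 := by positivity
    nlinarith
  obtain ⟨q, hq⟩ : ∃ q, q = (e ^ 2 - 2 * S ^ 2 + D) / 2 := ⟨_, rfl⟩
  have hq0 : 0 < q := by rw [hq]; have := sq_pos_of_pos he; linarith
  have hDq : D = 2 * q + 2 * S ^ 2 - e ^ 2 := by rw [hq]; ring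
  have hw : 0 < q + S ^ 2 := by positivity
  have hv : 0 < q ^ 2 / e ^ 2 := by positivity
  -- The quadratic equation for `q`.
  have heq : e ^ 2 = q * (q + 2 * S ^ 2) / (q + S ^ 2) := by
    rw [eq_div_iff hw.ne']
    rw [hDq] at hD2
    linear_combination -hD2 / 4
  refine OTe_self_le (by positivity) hα (integrable_pot hα _ _ _ _ _)
    (C := (√(2 * Real.pi * q))⁻¹)
    (T := fun x z => gaussianPDFReal x q.toNNReal z)
    (G := fun x y => gaussianPDFReal (n + q * (x - n + (y - n)) / e ^ 2) (q ^ 2 / e ^ 2).toNNReal)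
    (φ := gaussianPDFReal n (q + S ^ 2).toNNReal)
    ?_ (measurable_gaussianPDFReal _ _)
    (fun x y => measurable_gaussianPDFReal _ _) ?_ ?_ ?_ ?_ ?_ ?_ ?_ ?_
  · exact measurable_uncurry_gaussianPDFReal.comp
      (measurable_fst.prodMk (measurable_const.prodMk measurable_snd))
  · exact fun x z => gaussianPDFReal_pos _ _ _ (by simpa using hq0)
  · intro x z
    rw [gaussianPDFReal_toNNReal hq0.le]
    refine mul_le_of_le_one_right (by positivity) (Real.exp_le_one_iff.2 ?_)
    exact div_nonpos_of_nonpos_of_nonneg (neg_nonpos.2 (sq_nonneg _)) (by positivity)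
  · exact fun z => gaussianPDFReal_pos _ _ _ (by simpa using hw)
  · exact fun x y z => gaussianPDFReal_pos _ _ _ (by simpa using hv)
  · exact fun x => lintegral_gaussianPDFReal_toNNReal hq0 x
  · exact lintegral_gaussianPDFReal_toNNReal hw n
  · exact fun x y => lintegral_gaussianPDFReal_toNNReal hv _
  · intro x y z
    rw [gaussianPDFReal_toNNReal hq0.le, gaussianPDFReal_toNNReal hq0.le,
      gaussianPDFReal_toNNReal hv.le, gaussianPDFReal_toNNReal hw.le]
    have hr : (D + e ^ 2) / (2 * e ^ 2) = (q + S ^ 2) / e ^ 2 := by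
      rw [hDq]; field_simp; ring
    have hr0 : 0 < (q + S ^ 2) / e ^ 2 := by positivity
    have hsplit : logGibbs (2 * e ^ 2) (pot e D n n S) (pot e D n n S) (x, y)
        = Real.log ((q + S ^ 2) / e ^ 2) / 2
          + ((1 - (D - e ^ 2) / (2 * S ^ 2)) * ((x - n) ^ 2 + (y - n) ^ 2)
            - (x - y) ^ 2) / (2 * e ^ 2) := by
      unfold logGibbs pot
      simp only
      rw [hr]
      field_simp
      ring
    have hconst : (√(2 * Real.pi * q))⁻¹ * (√(2 * Real.pi * q))⁻¹
        = √((q + S ^ 2) / e ^ 2) * (√(2 * Real.pi * (q ^ 2 / e ^ 2)))⁻¹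
          * (√(2 * Real.pi * (q + S ^ 2)))⁻¹ := by
      have h2π : 0 < 2 * Real.pi := by positivity
      rw [← mul_inv, Real.mul_self_sqrt (by positivity), Real.sqrt_div hw.le,
        Real.sqrt_sq he.le, Real.sqrt_mul h2π.le (q ^ 2 / e ^ 2), ← div_pow,
        Real.sqrt_sq (by positivity), Real.sqrt_mul h2π.le (q + S ^ 2)]
      have h3 := Real.sqrt_pos.2 h2π
      have h4 := Real.sqrt_pos.2 hw
      have h5 := Real.sq_sqrt h2π.le
      have h6 : (2 * Real.pi * q)⁻¹ = (√(2 * Real.pi) ^ 2 * q)⁻¹ := by rw [h5]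
      rw [h6]
      field_simp
    have hexp : -(z - x) ^ 2 / (2 * q) + -(z - y) ^ 2 / (2 * q)
        = ((1 - (D - e ^ 2) / (2 * S ^ 2)) * ((x - n) ^ 2 + (y - n) ^ 2)
            - (x - y) ^ 2) / (2 * e ^ 2)
          + -(z - (n + q * (x - n + (y - n)) / e ^ 2)) ^ 2 / (2 * (q ^ 2 / e ^ 2))
          + -(z - n) ^ 2 / (2 * (q + S ^ 2)) := by
      rw [hDq]
      have h7 : z - (n + q * (x - n + (y - n)) / e ^ 2)
        = z - n - q * (x - n + (y - n)) / e ^ 2 := by ring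
      have h8 : z - x = (z - n) - (x - n) := by ring
      have h9 : z - y = (z - n) - (y - n) := by ring
      have h10 : x - y = (x - n) - (y - n) := by ring
      rw [h7, h8, h9, h10]
      generalize x - n = a
      generalize y - n = b
      generalize z - n = c
      have h11 : 0 < q + 2 * S ^ 2 := by positivity
      rw [heq]
      field_simp
      ring
    rw [hsplit, Real.exp_add, ← Real.log_sqrt hr0.le, Real.exp_log (Real.sqrt_pos.2 hr0)]
    calc _ = ((√(2 * Real.pi * q))⁻¹ * (√(2 * Real.pi * q))⁻¹)
          * Real.exp (-(z - x) ^ 2 / (2 * q) + -(z - y) ^ 2 / (2 * q)) := by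
          rw [Real.exp_add]; ring
      _ = _ := by rw [hconst, hexp, Real.exp_add, Real.exp_add]; ring

/-! ### Assembling the barycenter inequality -/

lemma SubGaussian.integrable_sq {α : Measure ℝ} (h : SubGaussian α) :
    Integrable (fun x => x ^ 2) α := by
  obtain ⟨q, hq, hlt⟩ := h
  have hi : Integrable (fun x => Real.exp (x ^ 2 / q)) α :=
    ⟨by fun_prop, by
      rw [hasFiniteIntegral_iff_ofReal (ae_of_all _ fun x => (Real.exp_pos _).le)]; exact hlt⟩
  refine Integrable.mono' (hi.const_mul q) (by fun_prop) (ae_of_all _ fun x => ?_)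
  rw [Real.norm_of_nonneg (sq_nonneg _)]
  have := Real.add_one_le_exp (x ^ 2 / q)
  calc x ^ 2 = q * (x ^ 2 / q) := by field_simp
    _ ≤ q * Real.exp (x ^ 2 / q) := by gcongr; linarith

lemma EReal_coe_sum_mul {ι : Type*} (s : Finset ι) (w a : ι → ℝ) :
    ∑ k ∈ s, ((w k : ℝ) : EReal) * ((a k : ℝ) : EReal)
      = ((∑ k ∈ s, w k * a k : ℝ) : EReal) := by
  classical
  induction s using Finset.induction_on with
  | empty => simp
  | insert i s hi ih => rw [Finset.sum_insert hi, Finset.sum_insert hi, ih, EReal.coe_add,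
      EReal.coe_mul]

lemma sqrt_disc {e s S : ℝ} (he : 0 < e) :
    0 < √(e ^ 4 + 4 * s ^ 2 * S ^ 2)
      ∧ √(e ^ 4 + 4 * s ^ 2 * S ^ 2) ^ 2 = e ^ 4 + 4 * s ^ 2 * S ^ 2 := by
  have : 0 < e ^ 4 := by positivity
  have h : 0 < e ^ 4 + 4 * s ^ 2 * S ^ 2 := by nlinarith [mul_nonneg (sq_nonneg s) (sq_nonneg S)]
  exact ⟨Real.sqrt_pos.2 h, Real.sq_sqrt h.le⟩

lemma OTe_gaussian_self_real {e s : ℝ} (he : 0 < e) (hs : 0 < s) (m : ℝ) :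
    ∃ o : ℝ, OTe (2 * e ^ 2) (gaussianReal m (s ^ 2).toNNReal) (gaussianReal m (s ^ 2).toNNReal)
      = (o : EReal) := by
  obtain ⟨hD, hD2⟩ := sqrt_disc (s := s) (S := s) he
  exact ⟨_, le_antisymm (OTe_gaussian_le he hs hs hD hD2 m m)
    (le_OTe_gaussian he hs hs hD hD2 m m (integrable_sq_gaussianReal _ _))⟩

lemma Sdiv_le_coe {ε : ℝ} {α β : Measure ℝ} {a b c : ℝ} (h1 : OTe ε α β ≤ (a : EReal))
    (h2 : (b : EReal) ≤ OTe ε α α) (h3 : (c : EReal) ≤ OTe ε β β) :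
    Sdiv ε α β ≤ ((a - 1 / 2 * b - 1 / 2 * c : ℝ) : EReal) := by
  have h0 : (0 : EReal) ≤ ((1 / 2 : ℝ) : EReal) := by
    rw [← EReal.coe_zero, EReal.coe_le_coe_iff]; norm_num
  rw [EReal.coe_sub, EReal.coe_sub, EReal.coe_mul, EReal.coe_mul]
  exact EReal.sub_le_sub (EReal.sub_le_sub h1 (mul_le_mul_of_nonneg_left h2 h0))
    (mul_le_mul_of_nonneg_left h3 h0)

lemma coe_le_Sdiv {ε : ℝ} {α β : Measure ℝ} {a b c : ℝ} (h1 : (a : EReal) ≤ OTe ε α β)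
    (h2 : OTe ε α α ≤ (b : EReal)) (h3 : OTe ε β β ≤ (c : EReal)) :
    ((a - 1 / 2 * b - 1 / 2 * c : ℝ) : EReal) ≤ Sdiv ε α β := by
  have h0 : (0 : EReal) ≤ ((1 / 2 : ℝ) : EReal) := by
    rw [← EReal.coe_zero, EReal.coe_le_coe_iff]; norm_num
  rw [EReal.coe_sub, EReal.coe_sub, EReal.coe_mul, EReal.coe_mul]
  exact EReal.sub_le_sub (EReal.sub_le_sub h1 (mul_le_mul_of_nonneg_left h2 h0))
    (mul_le_mul_of_nonneg_left h3 h0)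

/-- First-order optimality of `N(M, S²)`: the weighted potentials average to the self-transport
potential, up to an additive constant. The fixed-point equation matches the quadratic terms and
`M = ∑ w k * μ k` cancels the linear ones. -/
lemma exists_integral_pot_eq {K : ℕ} {e S M Δ : ℝ} {w μ D : Fin K → ℝ}
    (hwsum : ∑ k, w k = 1) (hM : M = ∑ k, w k * μ k) (hfix : ∑ k, w k * D k = Δ) :
    ∃ C : ℝ, ∀ α : Measure ℝ, IsProbabilityMeasure α → Integrable (fun x => x ^ 2) α →
      ∑ k, w k * ∫ y, pot e (D k) M (μ k) S y ∂α = ∫ y, pot e Δ M M S y ∂α + C := by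
  set c : Fin K → ℝ := fun k =>
    (M - μ k) ^ 2 / 2 + e ^ 2 * (Real.log ((D k + e ^ 2) / (2 * e ^ 2)) / 2) with hc
  refine ⟨∑ k, w k * c k - e ^ 2 * (Real.log ((Δ + e ^ 2) / (2 * e ^ 2)) / 2),
    fun α hα h2 => ?_⟩
  have hpt : ∀ y, ∑ k, w k * pot e (D k) M (μ k) S y = pot e Δ M M S y
      + (∑ k, w k * c k - e ^ 2 * (Real.log ((Δ + e ^ 2) / (2 * e ^ 2)) / 2)) := by
    intro y
    have : ∀ k, w k * pot e (D k) M (μ k) S y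
        = w k * ((1 + e ^ 2 / (2 * S ^ 2)) * (y - M) ^ 2 + 2 * M * (y - M))
          - w k * D k * ((y - M) ^ 2 / (2 * S ^ 2)) - w k * μ k * (2 * (y - M)) + w k * c k := by
      intro k
      rw [hc]
      unfold pot
      ring
    simp_rw [this]
    rw [Finset.sum_add_distrib, Finset.sum_sub_distrib, Finset.sum_sub_distrib,
      ← Finset.sum_mul, ← Finset.sum_mul, ← Finset.sum_mul, hwsum, hfix, ← hM]
    unfold pot
    ring
  calc _ = ∫ y, ∑ k, w k * pot e (D k) M (μ k) S y ∂α := by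
        rw [integral_finsetSum _ fun k _ => (integrable_pot h2 _ _ _ _ _).const_mul _]
        simp_rw [integral_const_mul]
    _ = _ := by
        simp_rw [hpt]
        rw [integral_add (integrable_pot h2 _ _ _ _ _) (integrable_const _)]
        simp

/-- debiasing of `S_ε`: with `ε = 2ε'²`, Gaussians `α_k = N(μ_k, σ_k²)`,
positive weights summing to 1, `μ̄ = Σ w_k μ_k`, and `S > 0` solving
`Σ_k w_k √(ε'⁴ + 4σ_k²S²) = √(ε'⁴ + 4S⁴)`, one has `min σ_k ≤ S ≤ max σ_k` and
`N(μ̄, S²)` minimizes `α ↦ Σ_k w_k S_ε(α_k, α)` over sub-Gaussian probability measures. -/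
theorem sinkhorn_divergence_gaussian_barycenter
    (ε' ε : ℝ) (hε' : 0 < ε') (hε : ε = 2 * ε' ^ 2)
    (K : ℕ) (hK : 1 ≤ K) (w μ σ : Fin K → ℝ)
    (hw : ∀ k, 0 < w k) (hwsum : ∑ k, w k = 1) (hσ : ∀ k, 0 < σ k)
    (μbar : ℝ) (hμbar : μbar = ∑ k, w k * μ k)
    (S : ℝ) (hS : 0 < S)
    (hfix : ∑ k, w k * Real.sqrt (ε' ^ 4 + 4 * σ k ^ 2 * S ^ 2)
      = Real.sqrt (ε' ^ 4 + 4 * S ^ 4)) :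
    ((∃ k, σ k ≤ S) ∧ (∃ k, S ≤ σ k)) ∧
    ∀ α : Measure ℝ, IsProbabilityMeasure α → SubGaussian α →
      ∑ k, ((w k : ℝ) : EReal) *
          Sdiv ε (gaussianReal (μ k) ((σ k ^ 2).toNNReal)) (gaussianReal μbar ((S ^ 2).toNNReal))
        ≤ ∑ k, ((w k : ℝ) : EReal) *
          Sdiv ε (gaussianReal (μ k) ((σ k ^ 2).toNNReal)) α := by
  subst hε
  have hΔeq : ε' ^ 4 + 4 * S ^ 4 = ε' ^ 4 + 4 * S ^ 2 * S ^ 2 := by ring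
  have hS2 : 0 < S ^ 2 := by positivity
  have he4 : 0 < ε' ^ 4 := by positivity
  have hne : (Finset.univ : Finset (Fin K)).Nonempty := ⟨⟨0, hK⟩, Finset.mem_univ _⟩
  refine ⟨⟨?_, ?_⟩, ?_⟩
  · by_contra! h
    refine hfix.not_gt ?_
    calc √(ε' ^ 4 + 4 * S ^ 4) = ∑ k, w k * √(ε' ^ 4 + 4 * S ^ 4) := by
          rw [← Finset.sum_mul, hwsum, one_mul]
      _ < _ := Finset.sum_lt_sum_of_nonempty hne fun k _ => by
          refine mul_lt_mul_of_pos_left (Real.sqrt_lt_sqrt (by positivity) ?_) (hw k)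
          have : S ^ 2 < σ k ^ 2 := pow_lt_pow_left₀ (h k) hS.le (by norm_num)
          nlinarith [mul_lt_mul_of_pos_right this hS2]
  · by_contra! h
    refine hfix.not_lt ?_
    calc _ < ∑ k, w k * √(ε' ^ 4 + 4 * S ^ 4) :=
          Finset.sum_lt_sum_of_nonempty hne fun k _ => by
            refine mul_lt_mul_of_pos_left (Real.sqrt_lt_sqrt (by positivity) ?_) (hw k)
            have : σ k ^ 2 < S ^ 2 := pow_lt_pow_left₀ (h k) (hσ k).le (by norm_num)
            nlinarith [mul_lt_mul_of_pos_right this hS2]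
      _ = √(ε' ^ 4 + 4 * S ^ 4) := by
          rw [← Finset.sum_mul, hwsum, one_mul]
  intro α hα hsub
  have hα2 := hsub.integrable_sq
  obtain ⟨C, hC⟩ := exists_integral_pot_eq (e := ε') (S := S) hwsum hμbar hfix
  choose o ho using fun k => OTe_gaussian_self_real hε' (hσ k) (μ k)
  have hdisc := fun k => sqrt_disc (s := σ k) (S := S) hε'
  obtain ⟨hΔ, hΔ2⟩ := sqrt_disc (s := S) (S := S) hε'
  rw [← hΔeq] at hΔ hΔ2
  set β := gaussianReal μbar ((S ^ 2).toNNReal) with hβ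
  have hβ2 : Integrable (fun x => x ^ 2) β := integrable_sq_gaussianReal _ _
  have hwE : ∀ k, (0 : EReal) ≤ ((w k : ℝ) : EReal) := fun k => by
    rw [← EReal.coe_zero, EReal.coe_le_coe_iff]; exact (hw k).le
  have hselfβ := le_OTe_gaussian hε' hS hS hΔ (by rw [hΔ2, hΔeq]) μbar μbar hβ2
  have hselfα := OTe_self_le_gaussian hε' hS hΔ hΔ2 μbar hα2
  refine (Finset.sum_le_sum fun k _ => mul_le_mul_of_nonneg_left (Sdiv_le_coe
    (OTe_gaussian_le hε' (hσ k) hS (hdisc k).1 (hdisc k).2 (μ k) μbar) (ho k).ge hselfβ)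
      (hwE k)).trans (le_trans (le_of_eq ?_) (Finset.sum_le_sum fun k _ =>
        mul_le_mul_of_nonneg_left (coe_le_Sdiv
    (le_OTe_gaussian hε' (hσ k) hS (hdisc k).1 (hdisc k).2 (μ k) μbar hα2) (ho k).le hselfα)
      (hwE k)))
  rw [EReal_coe_sum_mul, EReal_coe_sum_mul]
  -- The dual values agree: the two integrals against the free marginal cancel up to `C`.
  have hval : ∀ γ : Measure ℝ, IsProbabilityMeasure γ → Integrable (fun x => x ^ 2) γ →
      ∑ k, w k * (∫ x, pot ε' √(ε' ^ 4 + 4 * σ k ^ 2 * S ^ 2) (μ k) μbar (σ k) x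
            ∂(gaussianReal (μ k) (σ k ^ 2).toNNReal)
          + ∫ y, pot ε' √(ε' ^ 4 + 4 * σ k ^ 2 * S ^ 2) μbar (μ k) S y ∂γ - 1 / 2 * o k
          - 1 / 2 * (∫ x, pot ε' √(ε' ^ 4 + 4 * S ^ 4) μbar μbar S x ∂γ
            + ∫ x, pot ε' √(ε' ^ 4 + 4 * S ^ 4) μbar μbar S x ∂γ))
        = ∑ k, w k * (∫ x, pot ε' √(ε' ^ 4 + 4 * σ k ^ 2 * S ^ 2) (μ k) μbar (σ k) x
            ∂(gaussianReal (μ k) (σ k ^ 2).toNNReal) - 1 / 2 * o k) + C := by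
    intro γ hγ hγ2
    have h1 := hC γ hγ hγ2
    have h2 : ∀ a b c d : ℝ, ∀ k, w k * (a + b - c - 1 / 2 * (d + d))
        = w k * (a - c) + w k * b - w k * d := by intros; ring
    simp_rw [h2]
    rw [Finset.sum_sub_distrib, Finset.sum_add_distrib, h1, ← Finset.sum_mul, hwsum]
    ring
  rw [hval β inferInstance hβ2, hval α hα hα2]
end

section
/- Let ε′ > 0 and ε = 2ε′². Let K ≥ 1, let w₁, …, w_K be positive reals summing to 1, let μ₁, …, μ_K ∈ ℝ and σ₁, …, σ_K > 0, and set α_k = N(μ_k, σ_k²) and μ̄ = Σ_k w_k μ_k. Let S > 0 satisfy Σ_{k=1}^K w_k √(ε′⁴ + 4σ_k² S²) = −ε′² + 2S². Then the Gaussian measure N(μ̄, S²) minimizes the functional α ↦ Σ_{k=1}^K w_k OT^L_ε(α_k, α) over all sub-Gaussian probability measures α on ℝ that are absolutely continuous with respect to Lebesgue measure with everywhere positive density. -/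
/-!
Write `e = ε' ^ 2`, so `ε = 2 * e`. For each `k` let `q_k` be the density of the Gaussian coupling
of `N(μ_k, σ_k ^ 2)` and `N(μbar, S ^ 2)` whose covariance `c_k > 0` solves
`c_k * e = σ_k ^ 2 * S ^ 2 - c_k ^ 2`. This choice of `c_k` makes the cross term in `x * y` cancel in
`(x - y) ^ 2 + ε * log q_k (x, y)`, which therefore splits as `F_k x + G_k y` with `F_k`, `G_k`
quadratic.

The Gibbs inequality (`integral_le_KLdiv`) then gives
`OTL ε α_k α ≥ ∫ F_k dα_k + ∫ G_k dα` for every `α` with finite second moment (`le_OTL`), and the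
coupling `q_k` itself shows the reverse bound for `α = N(μbar, S ^ 2)` (`OTL_gaussian_le`).

The equation for `S` is equivalent to `∑ w_k * σ_k ^ 2 / c_k = 1`; together with
`μbar = ∑ w_k * μ_k` it forces `∑ w_k * G_k` to be the constant `-μbar ^ 2`. Hence the weighted lower
bound does not depend on `α`, and it equals the value attained at `N(μbar, S ^ 2)`.
-/

open MeasureTheory ProbabilityTheory
open scoped ENNReal Classical

/-- Entropic optimal transport cost on `ℝ` with quadratic cost and Lebesgue reference
measure: `OT^L_ε(α, β) = inf { ∫ (x-y)² dπ + ε KL(π ‖ λ ⊗ λ) }` over couplings `π`. -/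
noncomputable def OTL (ε : ℝ) (α β : Measure ℝ) : EReal :=
  ⨅ (π : Measure (ℝ × ℝ)) (_ : IsProbabilityMeasure π)
    (_ : π.fst = α) (_ : π.snd = β),
    (((∫⁻ p, ENNReal.ofReal ((p.1 - p.2) ^ 2) ∂π : ℝ≥0∞) : EReal)
      + (ε : EReal) * KLdiv π ((volume : Measure ℝ).prod (volume : Measure ℝ)))

/-- A measure on `ℝ` is Lebesgue-continuous with everywhere positive density. -/
def HasPositiveDensity (α : Measure ℝ) : Prop :=
  ∃ f : ℝ → ℝ, Measurable f ∧ (∀ x, 0 < f x) ∧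
    α = volume.withDensity fun x => ENNReal.ofReal (f x)

/-! ### Bivariate Gaussian couplings -/

/-- Logarithm of the density of the bivariate Gaussian with means `μ`, `m`, variances `A`, `B` and
covariance `c`, whose covariance determinant `A * B - c ^ 2` is written as `c * e`. -/
noncomputable def logQ (A B c e μ m : ℝ) (p : ℝ × ℝ) : ℝ :=
  -(B * (p.1 - μ) ^ 2 - 2 * c * (p.1 - μ) * (p.2 - m) + A * (p.2 - m) ^ 2) / (2 * (c * e))
    - Real.log (2 * Real.pi * Real.sqrt (c * e))

lemma measurable_logQ (A B c e μ m : ℝ) : Measurable (logQ A B c e μ m) := by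
  unfold logQ; fun_prop

lemma logQ_swap (A B c e μ m x y : ℝ) :
    logQ A B c e μ m (x, y) = logQ B A c e m μ (y, x) := by
  simp only [logQ]; ring

/-- Disintegration of the Gaussian density along its first marginal; `c * e / A` is the conditional
variance. -/
lemma exp_logQ {A B c e : ℝ} (hA : 0 < A) (hc : 0 < c) (he : 0 < e)
    (hdet : c * e = A * B - c ^ 2) (μ m x y : ℝ) :
    Real.exp (logQ A B c e μ m (x, y)) = gaussianPDFReal μ A.toNNReal x *
      gaussianPDFReal (m + c / A * (x - μ)) (c * e / A).toNNReal y := by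
  have hce : 0 < c * e := mul_pos hc he
  have hpi := Real.pi_pos
  have hB : B = (c * e + c ^ 2) / A := by field_simp; linarith
  simp only [logQ, gaussianPDFReal]
  rw [Real.coe_toNNReal _ hA.le, Real.coe_toNNReal _ (div_pos hce hA).le, Real.exp_sub,
    Real.exp_log (by positivity)]
  have hs : Real.sqrt (2 * Real.pi * A) * Real.sqrt (2 * Real.pi * (c * e / A))
      = 2 * Real.pi * Real.sqrt (c * e) := by
    rw [← Real.sqrt_mul (by positivity),
      show 2 * Real.pi * A * (2 * Real.pi * (c * e / A)) = (2 * Real.pi) ^ 2 * (c * e) by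
        field_simp, Real.sqrt_mul (by positivity), Real.sqrt_sq (by positivity)]
  rw [← hs, mul_mul_mul_comm, ← mul_inv, ← Real.exp_add, div_eq_inv_mul]
  congr 2
  rw [hB]
  field_simp
  ring

lemma lintegral_exp_logQ {A B c e : ℝ} (hA : 0 < A) (hc : 0 < c) (he : 0 < e)
    (hdet : c * e = A * B - c ^ 2) (μ m x : ℝ) :
    ∫⁻ y, ENNReal.ofReal (Real.exp (logQ A B c e μ m (x, y))) = gaussianPDF μ A.toNNReal x := by
  simp_rw [exp_logQ hA hc he hdet, ENNReal.ofReal_mul (gaussianPDFReal_nonneg _ _ _)]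
  rw [lintegral_const_mul _ (by fun_prop), lintegral_gaussianPDFReal_eq_one _ (by
    have : 0 < c * e / A := by positivity
    simpa using this)]
  simp [gaussianPDF]

/-- The bivariate Gaussian measure with log-density `logQ`. -/
noncomputable def gaussCoupling (A B c e μ m : ℝ) : Measure (ℝ × ℝ) :=
  ((volume : Measure ℝ).prod (volume : Measure ℝ)).withDensity
    fun p => ENNReal.ofReal (Real.exp (logQ A B c e μ m p))

lemma measurable_exp_logQ (A B c e μ m : ℝ) :
    Measurable fun p => ENNReal.ofReal (Real.exp (logQ A B c e μ m p)) :=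
  ((measurable_logQ A B c e μ m).exp).ennreal_ofReal

lemma gaussCoupling_fst {A B c e : ℝ} (hA : 0 < A) (hc : 0 < c) (he : 0 < e)
    (hdet : c * e = A * B - c ^ 2) (μ m : ℝ) :
    (gaussCoupling A B c e μ m).fst = gaussianReal μ A.toNNReal := by
  ext s hs
  have hq := measurable_exp_logQ A B c e μ m
  rw [Measure.fst_apply hs, gaussCoupling, withDensity_apply _ (measurable_fst hs),
    gaussianReal_apply _ (by simpa using hA), ← Set.prod_univ, ← Measure.prod_restrict,
    lintegral_prod _ hq.aemeasurable]
  simp only [Measure.restrict_univ]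
  simp_rw [lintegral_exp_logQ hA hc he hdet]

lemma gaussCoupling_snd {A B c e : ℝ} (hB : 0 < B) (hc : 0 < c) (he : 0 < e)
    (hdet : c * e = A * B - c ^ 2) (μ m : ℝ) :
    (gaussCoupling A B c e μ m).snd = gaussianReal m B.toNNReal := by
  ext s hs
  have hq := measurable_exp_logQ A B c e μ m
  rw [Measure.snd_apply hs, gaussCoupling, withDensity_apply _ (measurable_snd hs),
    gaussianReal_apply _ (by simpa using hB), ← Set.univ_prod, ← Measure.prod_restrict,
    lintegral_prod_symm _ hq.aemeasurable]
  simp only [Measure.restrict_univ]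
  simp_rw [logQ_swap A B, lintegral_exp_logQ hB hc he (hdet.trans (by ring))]

/-! ### Gibbs inequality and entropy -/

/-- Gibbs inequality: a sub-probability density `exp h` yields the lower bound `∫ h dπ` for the
relative entropy. It follows from `t + 1 ≤ exp t` at `t = h - log (dπ/dρ)`, since
`∫ exp h / (dπ/dρ) dπ ≤ ∫ exp h dρ ≤ 1`. -/
lemma integral_le_KLdiv {X : Type*} [MeasurableSpace X] (π ρ : Measure X)
    [IsProbabilityMeasure π] [SigmaFinite ρ] {h : X → ℝ} (hm : Measurable h)
    (h1 : ∫⁻ x, ENNReal.ofReal (Real.exp (h x)) ∂ρ ≤ 1) (hint : Integrable h π) :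
    ((∫ x, h x ∂π : ℝ) : EReal) ≤ KLdiv π ρ := by
  unfold KLdiv
  split_ifs with H
  swap
  · exact le_top
  obtain ⟨hac, hl⟩ := H
  rw [EReal.coe_le_coe_iff]
  set l : X → ℝ := fun x => Real.log (π.rnDeriv ρ x).toReal with hldef
  have hlm : Measurable l := (Measure.measurable_rnDeriv π ρ).ennreal_toReal.log
  have hem : Measurable fun x => ENNReal.ofReal (Real.exp (h x - l x)) :=
    ((hm.sub hlm).exp).ennreal_ofReal
  have hle : ∫⁻ x, ENNReal.ofReal (Real.exp (h x - l x)) ∂π ≤ 1 := by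
    rw [← lintegral_rnDeriv_mul hac hem.aemeasurable]
    refine (lintegral_mono_ae ?_).trans h1
    filter_upwards [Measure.rnDeriv_lt_top π ρ] with x hx
    by_cases h0 : π.rnDeriv ρ x = 0
    · simp [h0]
    have hpos : 0 < (π.rnDeriv ρ x).toReal := ENNReal.toReal_pos h0 hx.ne
    rw [← ENNReal.ofReal_toReal hx.ne, ← ENNReal.ofReal_mul hpos.le]
    apply le_of_eq
    congr 1
    rw [Real.exp_sub, hldef]
    simp only
    rw [Real.exp_log hpos]
    field_simp
  have hei : Integrable (fun x => Real.exp (h x - l x)) π := by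
    refine ⟨((hm.sub hlm).exp).aestronglyMeasurable, ?_⟩
    rw [hasFiniteIntegral_iff_ofReal (ae_of_all _ fun x => (Real.exp_pos _).le)]
    exact hle.trans_lt ENNReal.one_lt_top
  have he1 : ∫ x, Real.exp (h x - l x) ∂π ≤ 1 := by
    rw [integral_eq_lintegral_of_nonneg_ae (ae_of_all _ fun x => (Real.exp_pos _).le) hei.1]
    exact ENNReal.toReal_le_of_le_ofReal zero_le_one (by simpa using hle)
  have hmono : ∫ x, (h x - l x + 1) ∂π ≤ ∫ x, Real.exp (h x - l x) ∂π :=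
    integral_mono ((hint.sub hl).add (integrable_const 1)) hei
      fun x => Real.add_one_le_exp _
  have hsplit : ∫ x, (h x - l x + 1) ∂π = ∫ x, (h x - l x) ∂π + ∫ _, (1 : ℝ) ∂π :=
    integral_add (hint.sub hl) (integrable_const 1)
  rw [hsplit, integral_sub hint hl] at hmono
  simp at hmono
  linarith

/-- The entropy of a measure with positive density `exp h` is `∫ h`. -/
lemma KLdiv_withDensity_exp {X : Type*} [MeasurableSpace X] (ρ : Measure X)
    [SigmaFinite ρ] {h : X → ℝ} (hm : Measurable h)
    (hint : Integrable h (ρ.withDensity fun x => ENNReal.ofReal (Real.exp (h x)))) :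
    KLdiv (ρ.withDensity fun x => ENNReal.ofReal (Real.exp (h x))) ρ =
      ((∫ x, h x ∂(ρ.withDensity fun x => ENNReal.ofReal (Real.exp (h x))) : ℝ) : EReal) := by
  set π := ρ.withDensity fun x => ENNReal.ofReal (Real.exp (h x)) with hπ
  have hac : π ≪ ρ := withDensity_absolutelyContinuous _ _
  have hae : (fun x => Real.log (π.rnDeriv ρ x).toReal) =ᵐ[π] h := by
    have := Measure.rnDeriv_withDensity ρ (hm.exp.ennreal_ofReal)
    filter_upwards [hac.ae_le this] with x hx
    rw [hπ, hx, ENNReal.toReal_ofReal (Real.exp_pos _).le, Real.log_exp]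
  unfold KLdiv
  rw [if_pos ⟨hac, (integrable_congr hae).2 hint⟩, integral_congr_ae hae]

/-! ### Entropic cost: dual bound and its attainment -/

lemma memLp_marginals {π : Measure (ℝ × ℝ)} {α β : Measure ℝ} (h1 : π.fst = α) (h2 : π.snd = β)
    (hα : MemLp id 2 α) (hβ : MemLp id 2 β) :
    MemLp (fun p : ℝ × ℝ => p.1) 2 π ∧ MemLp (fun p : ℝ × ℝ => p.2) 2 π := by
  subst h1 h2
  exact ⟨hα.comp_of_map measurable_fst.aemeasurable, hβ.comp_of_map measurable_snd.aemeasurable⟩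

lemma integrable_logQ {π : Measure (ℝ × ℝ)} [IsProbabilityMeasure π]
    (h1 : MemLp (fun p : ℝ × ℝ => p.1) 2 π) (h2 : MemLp (fun p : ℝ × ℝ => p.2) 2 π)
    (A B c e μ m : ℝ) : Integrable (logQ A B c e μ m) π := by
  have k1 : MemLp (fun p : ℝ × ℝ => p.1 - μ) 2 π := h1.sub (memLp_const μ)
  have k2 : MemLp (fun p : ℝ × ℝ => p.2 - m) 2 π := h2.sub (memLp_const m)
  have i12 : Integrable (fun p : ℝ × ℝ => (p.1 - μ) * (p.2 - m)) π := k1.integrable_mul k2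
  have := ((((k1.integrable_sq.const_mul B).sub (i12.const_mul (2 * c))).add
    (k2.integrable_sq.const_mul A)).neg.div_const (2 * (c * e))).sub
    (integrable_const (Real.log (2 * Real.pi * Real.sqrt (c * e))))
  refine this.congr (ae_of_all _ fun p => ?_)
  simp only [logQ, Pi.sub_apply, Pi.add_apply, Pi.neg_apply]
  ring

lemma cost_eq {π : Measure (ℝ × ℝ)} (hi : Integrable (fun p : ℝ × ℝ => (p.1 - p.2) ^ 2) π) :
    ((∫⁻ p, ENNReal.ofReal ((p.1 - p.2) ^ 2) ∂π : ℝ≥0∞) : EReal) =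
      ((∫ p, (p.1 - p.2) ^ 2 ∂π : ℝ) : EReal) := by
  rw [← ofReal_integral_eq_lintegral_ofReal hi (ae_of_all _ fun p => sq_nonneg _),
    EReal.coe_ennreal_ofReal, max_eq_left (integral_nonneg fun p => sq_nonneg _)]

/-- When `(x - y) ^ 2 + ε * logQ` splits as `F x + G y`, its integral against a coupling depends
only on the marginals. -/
lemma integral_cost_add {π : Measure (ℝ × ℝ)} [IsProbabilityMeasure π] {α β : Measure ℝ}
    (h1 : π.fst = α) (h2 : π.snd = β) (hα : MemLp id 2 α) (hβ : MemLp id 2 β)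
    {A B c e μ m ε : ℝ} {F G : ℝ → ℝ}
    (hFG : ∀ x y, (x - y) ^ 2 + ε * logQ A B c e μ m (x, y) = F x + G y)
    (hF : Integrable F α) (hG : Integrable G β) :
    Integrable (fun p : ℝ × ℝ => (p.1 - p.2) ^ 2) π ∧
    ∫ p, (p.1 - p.2) ^ 2 ∂π + ε * ∫ p, logQ A B c e μ m p ∂π
      = ∫ x, F x ∂α + ∫ y, G y ∂β := by
  obtain ⟨k1, k2⟩ := memLp_marginals h1 h2 hα hβ
  have hcost : Integrable (fun p : ℝ × ℝ => (p.1 - p.2) ^ 2) π := (k1.sub k2).integrable_sq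
  have hq := integrable_logQ k1 k2 A B c e μ m
  refine ⟨hcost, ?_⟩
  subst h1 h2
  rw [← integral_const_mul, ← integral_add hcost (hq.const_mul ε)]
  have : ∀ p : ℝ × ℝ, (p.1 - p.2) ^ 2 + ε * logQ A B c e μ m p = F p.1 + G p.2 :=
    fun p => hFG p.1 p.2
  simp_rw [this]
  have hsplit : ∫ p : ℝ × ℝ, (F p.1 + G p.2) ∂π = ∫ p, F p.1 ∂π + ∫ p, G p.2 ∂π :=
    integral_add (hF.comp_measurable measurable_fst) (hG.comp_measurable measurable_snd)
  rw [hsplit, Measure.fst, Measure.snd, integral_map measurable_fst.aemeasurable hF.1,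
    integral_map measurable_snd.aemeasurable hG.1]

lemma lintegral_exp_logQ_prod {A B c e : ℝ} (hA : 0 < A) (hc : 0 < c) (he : 0 < e)
    (hdet : c * e = A * B - c ^ 2) (μ m : ℝ) :
    ∫⁻ p, ENNReal.ofReal (Real.exp (logQ A B c e μ m p))
      ∂((volume : Measure ℝ).prod (volume : Measure ℝ)) = 1 := by
  rw [lintegral_prod _ (measurable_exp_logQ A B c e μ m).aemeasurable]
  simp_rw [lintegral_exp_logQ hA hc he hdet]
  exact lintegral_gaussianPDF_eq_one _ (by simpa using hA)

/-- Weak duality: potentials built from a Gaussian plan bound the entropic cost from below. -/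
lemma le_OTL {α β : Measure ℝ} (hα : MemLp id 2 α) (hβ : MemLp id 2 β)
    {A B c e μ m ε : ℝ} (hA : 0 < A) (hc : 0 < c) (he : 0 < e) (hε : 0 ≤ ε)
    (hdet : c * e = A * B - c ^ 2) {F G : ℝ → ℝ}
    (hFG : ∀ x y, (x - y) ^ 2 + ε * logQ A B c e μ m (x, y) = F x + G y)
    (hF : Integrable F α) (hG : Integrable G β) :
    ((∫ x, F x ∂α + ∫ y, G y ∂β : ℝ) : EReal) ≤ OTL ε α β := by
  unfold OTL
  refine le_iInf fun π => le_iInf fun hπ => le_iInf fun h1 => le_iInf fun h2 => ?_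
  obtain ⟨hcost, heq⟩ := integral_cost_add h1 h2 hα hβ hFG hF hG
  obtain ⟨k1, k2⟩ := memLp_marginals h1 h2 hα hβ
  rw [cost_eq hcost, ← heq, EReal.coe_add, EReal.coe_mul]
  gcongr
  exact integral_le_KLdiv π _ (measurable_logQ A B c e μ m)
    (lintegral_exp_logQ_prod hA hc he hdet μ m).le
    (integrable_logQ k1 k2 A B c e μ m)

/-- The Gaussian plan `gaussCoupling` attains the dual bound given by its own potentials. -/
lemma OTL_gaussian_le {A B c e μ m ε : ℝ} (hA : 0 < A) (hB : 0 < B) (hc : 0 < c) (he : 0 < e)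
    (hdet : c * e = A * B - c ^ 2) {F G : ℝ → ℝ}
    (hFG : ∀ x y, (x - y) ^ 2 + ε * logQ A B c e μ m (x, y) = F x + G y)
    (hF : Integrable F (gaussianReal μ A.toNNReal))
    (hG : Integrable G (gaussianReal m B.toNNReal)) :
    OTL ε (gaussianReal μ A.toNNReal) (gaussianReal m B.toNNReal) ≤
      ((∫ x, F x ∂(gaussianReal μ A.toNNReal) + ∫ y, G y ∂(gaussianReal m B.toNNReal) : ℝ) :
        EReal) := by
  have hα : MemLp id 2 (gaussianReal μ A.toNNReal) := memLp_id_gaussianReal 2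
  have hβ : MemLp id 2 (gaussianReal m B.toNNReal) := memLp_id_gaussianReal 2
  have h1 := gaussCoupling_fst hA hc he hdet μ m
  have h2 := gaussCoupling_snd hB hc he hdet μ m
  have hprob : IsProbabilityMeasure (gaussCoupling A B c e μ m) := by
    constructor
    rw [← Measure.fst_univ, h1, measure_univ]
  obtain ⟨hcost, heq⟩ := integral_cost_add h1 h2 hα hβ hFG hF hG
  obtain ⟨k1, k2⟩ := memLp_marginals h1 h2 hα hβ
  unfold OTL
  refine iInf_le_of_le (gaussCoupling A B c e μ m) <| iInf_le_of_le hprob <| iInf_le_of_le h1 <|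
    iInf_le_of_le h2 ?_
  have hkl : KLdiv (gaussCoupling A B c e μ m) ((volume : Measure ℝ).prod (volume : Measure ℝ)) =
      ((∫ p, logQ A B c e μ m p ∂(gaussCoupling A B c e μ m) : ℝ) : EReal) :=
    KLdiv_withDensity_exp _ (measurable_logQ A B c e μ m) (integrable_logQ k1 k2 A B c e μ m)
  rw [cost_eq hcost, hkl, ← heq, EReal.coe_add, EReal.coe_mul]

/-! ### Second moments -/

lemma SubGaussian.memLp_id {α : Measure ℝ} (h : SubGaussian α) : MemLp id 2 α := by
  obtain ⟨q, hq, hfin⟩ := h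
  rw [memLp_two_iff_integrable_sq (by fun_prop)]
  have hexp : Integrable (fun x => Real.exp (x ^ 2 / q)) α := by
    refine ⟨by fun_prop, ?_⟩
    rwa [hasFiniteIntegral_iff_ofReal (ae_of_all _ fun x => (Real.exp_pos _).le)]
  refine (hexp.const_mul q).mono' (by fun_prop) (ae_of_all _ fun x => ?_)
  have h1 := Real.add_one_le_exp (x ^ 2 / q)
  have h2 : x ^ 2 = q * (x ^ 2 / q) := by field_simp
  simp only [id, Real.norm_eq_abs, abs_of_nonneg (sq_nonneg x)]
  nlinarith

lemma integrable_quadratic {α : Measure ℝ} [IsProbabilityMeasure α] (h : MemLp id 2 α)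
    (a b t d : ℝ) : Integrable (fun x => x ^ 2 - a * (x - t) ^ 2 - b * x + d) α := by
  have h2 : Integrable (fun x : ℝ => x ^ 2) α := h.integrable_sq
  have h3 : Integrable (fun x : ℝ => (x - t) ^ 2) α :=
    (MemLp.sub h (memLp_const t)).integrable_sq
  have h4 : Integrable (fun x : ℝ => x) α := h.integrable (by norm_num)
  exact ((h2.sub (h3.const_mul a)).sub (h4.const_mul b)).add (integrable_const d)

/-- blurring bias of `OT_ε^L`: with `ε = 2ε'²`, Gaussians
`α_k = N(μ_k, σ_k²)`, positive weights summing to 1, `μ̄ = Σ w_k μ_k`, and `S > 0`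
solving `Σ_k w_k √(ε'⁴ + 4σ_k²S²) = −ε'² + 2S²`, the Gaussian `N(μ̄, S²)` minimizes
`α ↦ Σ_k w_k OT^L_ε(α_k, α)` over sub-Gaussian probability measures that are
Lebesgue-continuous with everywhere positive density. -/
theorem ot_lebesgue_gaussian_barycenter
    (ε' ε : ℝ) (hε' : 0 < ε') (hε : ε = 2 * ε' ^ 2)
    (K : ℕ) (hK : 1 ≤ K) (w μ σ : Fin K → ℝ)
    (hw : ∀ k, 0 < w k) (hwsum : ∑ k, w k = 1) (hσ : ∀ k, 0 < σ k)
    (μbar : ℝ) (hμbar : μbar = ∑ k, w k * μ k)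
    (S : ℝ) (hS : 0 < S)
    (hfix : ∑ k, w k * Real.sqrt (ε' ^ 4 + 4 * σ k ^ 2 * S ^ 2) = -ε' ^ 2 + 2 * S ^ 2) :
    ∀ α : Measure ℝ, IsProbabilityMeasure α → SubGaussian α → HasPositiveDensity α →
      ∑ k, ((w k : ℝ) : EReal) *
          OTL ε (gaussianReal (μ k) ((σ k ^ 2).toNNReal)) (gaussianReal μbar ((S ^ 2).toNNReal))
        ≤ ∑ k, ((w k : ℝ) : EReal) *
          OTL ε (gaussianReal (μ k) ((σ k ^ 2).toNNReal)) α := by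
  intro α hα hsub _
  have hα2 := hsub.memLp_id
  have he : 0 < ε' ^ 2 := by positivity
  have hS2 : 0 < S ^ 2 := by positivity
  have hσ2 : ∀ k, 0 < σ k ^ 2 := fun k => pow_pos (hσ k) 2
  -- `c k` is the positive root of `c ^ 2 + ε' ^ 2 * c = σ k ^ 2 * S ^ 2`: the covariance of the
  -- optimal plan between `N(μ k, σ k ^ 2)` and `N(μbar, S ^ 2)`.
  set r : Fin K → ℝ := fun k => Real.sqrt (ε' ^ 4 + 4 * σ k ^ 2 * S ^ 2) with hr
  set c : Fin K → ℝ := fun k => (r k - ε' ^ 2) / 2 with hc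
  have hrsq : ∀ k, r k ^ 2 = ε' ^ 4 + 4 * σ k ^ 2 * S ^ 2 := fun k =>
    Real.sq_sqrt (by positivity)
  have hcpos : ∀ k, 0 < c k := fun k => by
    have h1 : ε' ^ 2 < r k := by
      apply Real.lt_sqrt_of_sq_lt
      nlinarith [mul_pos (hσ2 k) hS2]
    simp only [hc]
    linarith
  have hdet : ∀ k, c k * ε' ^ 2 = σ k ^ 2 * S ^ 2 - c k ^ 2 := fun k => by
    simp only [hc]
    nlinarith [hrsq k]
  have hsumc : ∑ k, w k * c k = S ^ 2 - ε' ^ 2 := by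
    have : ∑ k, w k * c k = (∑ k, w k * r k) / 2 - (∑ k, w k) * (ε' ^ 2 / 2) := by
      rw [Finset.sum_div, Finset.sum_mul, ← Finset.sum_sub_distrib]
      exact Finset.sum_congr rfl fun k _ => by simp only [hc]; ring
    rw [this, hfix, hwsum]
    ring
  -- The fixed-point equation says that the `y ^ 2` coefficients of the potentials average to `0`.
  have hsumq : ∑ k, w k * (σ k ^ 2 / c k) = 1 := by
    have : ∀ k, w k * (σ k ^ 2 / c k) = (w k * c k + w k * ε' ^ 2) / S ^ 2 := fun k => by
      have hk := hcpos k
      have hdk := hdet k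
      field_simp
      linear_combination -w k * hdk
    rw [Finset.sum_congr rfl fun k _ => this k, ← Finset.sum_div, Finset.sum_add_distrib,
      ← Finset.sum_mul, hsumc, hwsum]
    field_simp
    ring
  set F : Fin K → ℝ → ℝ := fun k x => x ^ 2 - S ^ 2 / c k * (x - μ k) ^ 2 - 2 * μbar * x +
    (2 * μ k * μbar - ε * Real.log (2 * Real.pi * Real.sqrt (c k * ε' ^ 2))) with hF
  set G : Fin K → ℝ → ℝ := fun k y => y ^ 2 - σ k ^ 2 / c k * (y - μbar) ^ 2 - 2 * μ k * y + 0
    with hG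
  have hFG : ∀ k x y, (x - y) ^ 2 + ε * logQ (σ k ^ 2) (S ^ 2) (c k) (ε' ^ 2) (μ k) μbar (x, y)
      = F k x + G k y := fun k x y => by
    have := hcpos k
    simp only [logQ, hF, hG, hε]
    field_simp
    ring
  have hGsum : ∀ y, ∑ k, w k * G k y = -μbar ^ 2 := fun y => by
    have : ∑ k, w k * G k y = (∑ k, w k) * y ^ 2
        - (∑ k, w k * (σ k ^ 2 / c k)) * (y - μbar) ^ 2 - (∑ k, w k * μ k) * (2 * y) := by
      rw [Finset.sum_mul, Finset.sum_mul, Finset.sum_mul, ← Finset.sum_sub_distrib,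
        ← Finset.sum_sub_distrib]
      exact Finset.sum_congr rfl fun k _ => by simp only [hG]; ring
    rw [this, hwsum, hsumq, ← hμbar]
    ring
  have hGint : ∀ (β : Measure ℝ) [IsProbabilityMeasure β], MemLp id 2 β →
      ∀ k, Integrable (G k) β := fun β _ hβ k => integrable_quadratic hβ _ _ _ _
  have hFint : ∀ k, Integrable (F k) (gaussianReal (μ k) (σ k ^ 2).toNNReal) := fun k =>
    integrable_quadratic (memLp_id_gaussianReal 2) _ _ _ _
  have hval : ∀ (β : Measure ℝ) [IsProbabilityMeasure β], MemLp id 2 β →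
      ∑ k, w k * (∫ x, F k x ∂(gaussianReal (μ k) (σ k ^ 2).toNNReal) + ∫ y, G k y ∂β) =
      ∑ k, w k * (∫ x, F k x ∂(gaussianReal (μ k) (σ k ^ 2).toNNReal)) - μbar ^ 2 :=
    fun β _ hβ => by
    simp_rw [mul_add, Finset.sum_add_distrib, ← integral_const_mul]
    rw [← integral_finsetSum _ fun k _ => (hGint β hβ k).const_mul (w k)]
    simp_rw [hGsum]
    simp [sub_eq_add_neg]
  have hN : MemLp id 2 (gaussianReal μbar (S ^ 2).toNNReal) := memLp_id_gaussianReal 2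
  have hcoe : ∀ L : Fin K → ℝ,
      ∑ k, ((w k : ℝ) : EReal) * ((L k : ℝ) : EReal) = ((∑ k, w k * L k : ℝ) : EReal) :=
    fun L => by
    simp_rw [← EReal.coe_mul]
    exact (map_sum (⟨⟨Real.toEReal, EReal.coe_zero⟩, EReal.coe_add⟩ : ℝ →+ EReal) _ _).symm
  calc _ ≤ ∑ k, ((w k : ℝ) : EReal) *
        ((∫ x, F k x ∂(gaussianReal (μ k) (σ k ^ 2).toNNReal) +
          ∫ y, G k y ∂(gaussianReal μbar (S ^ 2).toNNReal) : ℝ) : EReal) := by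
        refine Finset.sum_le_sum fun k _ => ?_
        refine mul_le_mul_of_nonneg_left ?_ (by exact_mod_cast (hw k).le)
        exact OTL_gaussian_le (hσ2 k) hS2 (hcpos k) he (hdet k) (hFG k) (hFint k) (hGint _ hN k)
    _ = ∑ k, ((w k : ℝ) : EReal) *
        ((∫ x, F k x ∂(gaussianReal (μ k) (σ k ^ 2).toNNReal) + ∫ y, G k y ∂α : ℝ) : EReal) := by
        rw [hcoe, hcoe, hval _ hN, hval α hα2]
    _ ≤ _ := by
        refine Finset.sum_le_sum fun k _ => ?_
        refine mul_le_mul_of_nonneg_left ?_ (by exact_mod_cast (hw k).le)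
        exact le_OTL (memLp_id_gaussianReal 2) hα2 (hσ2 k) (hcpos k) he (by rw [hε]; positivity)
          (hdet k) (hFG k) (hFint k) (hGint α hα2 k)
end
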